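/- The prime elements of the multiplicative monoid ℕ₀[x]* are exactly the prime integers (viewed as constant polynomials) and the polynomial x. -/

import Mathlib

open Polynomial

/-- `f ∈ ℕ₀[x]`: all coefficients of `f` are nonnegative. -/
def NNPoly (f : Polynomial ℤ) : Prop := ∀ n, 0 ≤ f.coeff n

/-- `f ∈ ℕ₀[x]* = ℕ₀[x] \ {0}`. -/
def NNStar (f : Polynomial ℤ) : Prop := NNPoly f ∧ f ≠ 0

/-- `f ∣_ℕ g`: divisibility in the monoid `ℕ₀[x]*`. -/
def DvdN (f g : Polynomial ℤ) : Prop := ∃ h, NNStar h ∧ g = f * h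

/-- `f` is an atom of the monoid `ℕ₀[x]*`. -/
def IsAtomN (f : Polynomial ℤ) : Prop :=
  NNStar f ∧ f ≠ 1 ∧ ∀ g h, NNStar g → NNStar h → f = g * h → g = 1 ∨ h = 1

/-- `f` is a prime element of the monoid `ℕ₀[x]*`. -/
def IsPrimeN (f : Polynomial ℤ) : Prop :=
  IsAtomN f ∧ ∀ g h, NNStar g → NNStar h → DvdN f (g * h) → DvdN f g ∨ DvdN f h

theorem nn_prime_aux (f : Polynomial ℤ) (hf : NNStar f) (hp : Prime f)
    (hq : ∀ k, NNPoly (f * k) → NNPoly k) : IsPrimeN f := by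
  have unit1 : ∀ g : Polynomial ℤ, NNStar g → IsUnit g → g = 1 := by
    intro g hg hu
    obtain ⟨u, hu1, rfl⟩ := Polynomial.isUnit_iff.1 hu
    have h0 := hg.1 0
    rw [coeff_C_zero] at h0
    rcases Int.isUnit_iff.1 hu1 with h | h
    · rw [h, C_1]
    · omega
  refine ⟨⟨hf, fun h => hp.not_isUnit (h ▸ isUnit_one), ?_⟩, ?_⟩
  · intro g h hg hh e
    rcases hp.irreducible.isUnit_or_isUnit e with hu | hu
    · exact Or.inl (unit1 g hg hu)
    · exact Or.inr (unit1 h hh hu)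
  · have key : ∀ g : Polynomial ℤ, NNStar g → f ∣ g → DvdN f g := by
      rintro g hg ⟨k, rfl⟩
      exact ⟨k, ⟨hq k hg.1, right_ne_zero_of_mul hg.2⟩, rfl⟩
    rintro g h hg hh ⟨k, hk, e⟩
    rcases hp.dvd_or_dvd ⟨k, e⟩ with h1 | h1
    · exact Or.inl (key g hg h1)
    · exact Or.inr (key h hh h1)

theorem nn_X_quot (k : Polynomial ℤ) (h : NNPoly (X * k)) : NNPoly k := by
  intro n
  have := h (n + 1)
  rwa [coeff_X_mul] at this

theorem nn_mul {f g : Polynomial ℤ} (hf : NNPoly f) (hg : NNPoly g) : NNPoly (f * g) := by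
  intro n
  rw [coeff_mul]
  exact Finset.sum_nonneg fun x _ => mul_nonneg (hf _) (hg _)

/-- The polynomial `B (1 + x + ⋯ + x^{2n}) - (B+1) x^n`. -/
noncomputable def qpoly (n : ℕ) (B : ℤ) : Polynomial ℤ :=
  C B * (∑ j ∈ Finset.range (2 * n + 1), X ^ j) - C (B + 1) * X ^ n

theorem geom_coeff (n k : ℕ) (g : Polynomial ℤ) (hd : g.natDegree ≤ n) (hk : n ≤ k)
    (hk2 : k ≤ 2 * n) :
    ((∑ j ∈ Finset.range (2 * n + 1), X ^ j) * g).coeff k = g.eval 1 := by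
  rw [Finset.sum_mul, finsetSum_coeff]
  have e1 : ∀ j ∈ Finset.range (2 * n + 1), (X ^ j * g).coeff k =
      if j ≤ k then g.coeff (k - j) else 0 := fun j _ => coeff_X_pow_mul' g j k
  rw [Finset.sum_congr rfl e1, ← Finset.sum_filter]
  have e2 : (Finset.range (2 * n + 1)).filter (fun j => j ≤ k) = Finset.range (k + 1) := by
    ext j
    simp only [Finset.mem_filter, Finset.mem_range]
    omega
  rw [e2, eval_eq_sum_range' (n := k + 1) (by omega), ← Finset.sum_range_reflect]
  refine Finset.sum_congr rfl fun j hj => ?_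
  rw [Finset.mem_range] at hj
  rw [one_pow, mul_one]
  congr 1
  omega

theorem qpoly_mul_nn (n : ℕ) (B : ℤ) (hB : 0 ≤ B) (g : Polynomial ℤ) (hg : NNPoly g)
    (hd : g.natDegree ≤ n) (h1 : ∀ i, g.coeff i + 1 ≤ g.eval 1) (h2 : ∀ i, g.coeff i ≤ B) :
    NNPoly (qpoly n B * g) := by
  intro k
  have hS : NNPoly (∑ j ∈ Finset.range (2 * n + 1), X ^ j : Polynomial ℤ) := by
    intro m
    rw [finsetSum_coeff]
    refine Finset.sum_nonneg fun j _ => ?_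
    rw [coeff_X_pow]
    split_ifs <;> norm_num
  have hSg := nn_mul hS hg k
  rw [qpoly, sub_mul, mul_assoc, mul_assoc, coeff_sub, coeff_C_mul, coeff_C_mul,
    coeff_X_pow_mul']
  split_ifs with hk
  · by_cases hk2 : k ≤ 2 * n
    · rw [geom_coeff n k g hd hk hk2]
      nlinarith [h1 (k - n), h2 (k - n), mul_le_mul_of_nonneg_left (h1 (k - n)) hB]
    · rw [coeff_eq_zero_of_natDegree_lt (p := g) (n := k - n) (by omega)]
      nlinarith [mul_nonneg hB hSg]
  · nlinarith [mul_nonneg hB hSg]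

theorem qpoly_not_nn (n : ℕ) (B : ℤ) : ¬ NNPoly (qpoly n B) := by
  intro h
  have := h n
  rw [qpoly, coeff_sub, coeff_C_mul, coeff_C_mul, finsetSum_coeff] at this
  simp only [coeff_X_pow] at this
  rw [Finset.sum_ite_eq, if_pos (by rw [Finset.mem_range]; omega)] at this
  simp at this

theorem not_prime_aux (f : Polynomial ℤ) (hf : NNPoly f) (h0 : f.coeff 0 ≠ 0)
    (hd : 1 ≤ f.natDegree) (hp : IsPrimeN f) : False := by
  have hne : f ≠ 0 := hp.1.1.2
  have hev : f.eval 1 = ∑ i ∈ Finset.range (f.natDegree + 1), f.coeff i := by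
    rw [eval_eq_sum_range]; simp
  have two : ∀ i j, i ≠ j → i ≤ f.natDegree → j ≤ f.natDegree →
      f.coeff i + f.coeff j ≤ f.eval 1 := by
    intro i j hij hi hj
    rw [hev, ← Finset.sum_pair hij]
    refine Finset.sum_le_sum_of_subset_of_nonneg ?_ fun a _ _ => hf a
    intro a ha
    simp only [Finset.mem_insert, Finset.mem_singleton] at ha
    rw [Finset.mem_range]
    omega
  have hlead : f.coeff f.natDegree ≠ 0 := by
    rw [coeff_natDegree]; exact leadingCoeff_ne_zero.2 hne
  have a0 := hf 0
  have an := hf f.natDegree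
  have f1 : ∀ i, f.coeff i + 1 ≤ f.eval 1 := by
    intro i
    by_cases hi : i ≤ f.natDegree
    · by_cases hi0 : i = 0
      · subst hi0
        have := two 0 f.natDegree (by omega) (by omega) le_rfl
        omega
      · have := two i 0 hi0 hi (by omega)
        omega
    · rw [coeff_eq_zero_of_natDegree_lt (by omega)]
      have := two 0 f.natDegree (by omega) (by omega) le_rfl
      omega
  have hB : 0 ≤ f.eval 1 := by have := f1 0; omega
  set n := f.natDegree with hn
  set B := f.eval 1 + 2 with hBdef
  have hfq : NNPoly (qpoly n B * f) :=
    qpoly_mul_nn n B (by omega) f hf le_rfl f1 fun i => by have := f1 i; omega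
  have hq0 : qpoly n B ≠ 0 := by
    intro h
    apply qpoly_not_nn n B
    rw [h]; intro i; simp
  have main : ∀ c : ℤ, 1 ≤ c → c ≤ 2 → f ∣ (X + C c) := by
    intro c hc hc2
    have hco : ∀ i, (X + C c : Polynomial ℤ).coeff i =
        (if 1 = i then 1 else 0) + (if i = 0 then c else 0) := by
      intro i
      rw [coeff_add, coeff_X, coeff_C]
    have hnn : NNPoly (X + C c) := by
      intro i; rw [hco]; split_ifs <;> omega
    have hne' : (X + C c : Polynomial ℤ) ≠ 0 := X_add_C_ne_zero c
    have hqg : NNPoly (qpoly n B * (X + C c)) := by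
      refine qpoly_mul_nn n B (by omega) _ hnn (by rw [natDegree_X_add_C]; exact hd) ?_ ?_
      · intro i
        rw [hco, eval_add, eval_X, eval_C]
        split_ifs <;> omega
      · intro i
        rw [hco]
        split_ifs <;> omega
    rcases hp.2 (qpoly n B * f) (X + C c) ⟨hfq, mul_ne_zero hq0 hne⟩ ⟨hnn, hne'⟩
      ⟨qpoly n B * (X + C c), ⟨hqg, mul_ne_zero hq0 hne'⟩, by ring⟩ with h | h
    · obtain ⟨k, hk, e⟩ := h
      rw [mul_comm] at e
      have := mul_left_cancel₀ hne e
      exact absurd (this ▸ hk.1) (qpoly_not_nn n B)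
    · obtain ⟨k, _, e⟩ := h
      exact ⟨k, e⟩
  have hdiv := dvd_sub (main 2 (by norm_num) le_rfl) (main 1 le_rfl (by norm_num))
  have e : (X + C 2 - (X + C 1) : Polynomial ℤ) = 1 := by
    rw [add_sub_add_left_eq_sub, ← C_sub]; norm_num
  rw [e] at hdiv
  have := natDegree_eq_zero_of_isUnit (isUnit_of_dvd_one hdiv)
  omega

/-- The prime elements of the monoid `ℕ₀[x]*` are exactly the prime integers (as constant
polynomials) and the polynomial `x`. -/
theorem stmt5 (f : Polynomial ℤ) :
    IsPrimeN f ↔ (∃ p : ℕ, p.Prime ∧ f = C (p : ℤ)) ∨ f = X := by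
  constructor
  · intro hp
    by_cases h0 : f.coeff 0 = 0
    · right
      obtain ⟨k, rfl⟩ := X_dvd_iff.2 h0
      have hk : NNStar k := ⟨nn_X_quot k hp.1.1.1, right_ne_zero_of_mul hp.1.1.2⟩
      have hX : NNStar (X : Polynomial ℤ) :=
        ⟨fun i => by rw [coeff_X]; split_ifs <;> norm_num, X_ne_zero⟩
      rcases hp.1.2.2 X k hX hk rfl with h | h
      · exact absurd (h ▸ isUnit_one) (not_isUnit_X (R := ℤ))
      · rw [h, mul_one]
    · left
      by_cases hd : 1 ≤ f.natDegree
      · exact (not_prime_aux f hp.1.1.1 h0 hd hp).elim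
      · obtain ⟨c, rfl⟩ := natDegree_eq_zero.1 (by omega : f.natDegree = 0)
        have hc := hp.1.1.1 0
        rw [coeff_C_zero] at hc h0
        lift c to ℕ using hc
        refine ⟨c, ?_, rfl⟩
        have hCst : ∀ a : ℕ, a ≠ 0 → NNStar (C (a : ℤ)) := by
          intro a ha
          refine ⟨fun i => ?_, ?_⟩
          · rw [coeff_C]; split_ifs <;> omega
          · rw [Ne, C_eq_zero]; omega
        have hC1 : ∀ a : ℕ, C (a : ℤ) = 1 → a = 1 := by
          intro a ha
          rw [← C_1, C_inj] at ha
          omega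
        rw [Nat.prime_iff, ← irreducible_iff_prime]
        refine ⟨fun hu => hp.1.2.1 ?_, ?_⟩
        · rw [Nat.isUnit_iff] at hu
          rw [hu]; simp
        · intro a b hab
          have ha : a ≠ 0 := by rintro rfl; simp [hab] at h0
          have hb : b ≠ 0 := by rintro rfl; simp [hab] at h0
          rw [Nat.isUnit_iff, Nat.isUnit_iff]
          rcases hp.1.2.2 (C (a : ℤ)) (C (b : ℤ)) (hCst a ha) (hCst b hb)
            (by rw [← C_mul, hab]; push_cast; rfl) with h | h
          · exact Or.inl (hC1 a h)
          · exact Or.inr (hC1 b h)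
  · rintro (⟨p, hp, rfl⟩ | rfl)
    · have hp0 : (0 : ℤ) < p := by exact_mod_cast hp.pos
      refine nn_prime_aux _ ⟨fun i => ?_, ?_⟩ (prime_C_iff.2 (Nat.prime_iff_prime_int.1 hp)) ?_
      · rw [coeff_C]; split_ifs <;> omega
      · rw [Ne, C_eq_zero]; omega
      · intro k hk i
        have := hk i
        rw [coeff_C_mul] at this
        exact nonneg_of_mul_nonneg_right this hp0
    · exact nn_prime_aux _ ⟨fun i => by rw [coeff_X]; split_ifs <;> norm_num, X_ne_zero⟩
        prime_X nn_X_quot
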